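/- For all integers m ≥ 0 and r ≥ 0, Σ_{k=0}^{m} (−1)^k · ⟦m+r+1, k+r+1⟧_{r+1} · B_k = (1/(m+1)) · ⟦m+r+2, r+2⟧_{r+1}, where B_k is the k-th Bernoulli number. -/

import Mathlib

/-- The `r`-Stirling numbers of the first kind `⟦n,k⟧_r`: `⟦r,r⟧_r = 1`,
`⟦n,k⟧_r = 0` if `n < r` or `k < r`, and
`⟦n,k⟧_r = (n-1)·⟦n-1,k⟧_r + ⟦n-1,k-1⟧_r` for `n > r`. -/
def rStirling1 (r : ℕ) : ℕ → ℕ → ℕ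
  | 0, k => if r = 0 ∧ k = 0 then 1 else 0
  | (n+1), k =>
    if n + 1 < r ∨ k < r then 0
    else if n + 1 = r then (if k = r then 1 else 0)
    else if k = 0 then 0
    else n * rStirling1 r n k + rStirling1 r n (k - 1)

/-- The (unsigned) Stirling numbers of the first kind. -/
def stirling1 : ℕ → ℕ → ℕ := rStirling1 0

/-!
Extend `k ↦ bernoulli k` linearly to a functional `φ` on `ℚ[X]`; the recurrence for the Bernoulli
numbers says exactly that `φ (p (X + 1)) - φ (p X)` is the linear coefficient of `p`. The number
`⟦m + r, k + r⟧_r` is the coefficient of `X ^ k` in the rising factorial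
`(X + r) ⋯ (X + r + m - 1)`, whose backward difference is `m` times the same product without its
last factor. Applying `φ` to this difference, with `X` replaced by `-X` to produce the signs, gives
the identity.
-/

open Polynomial hiding bernoulli sum_bernoulli

section rStirling1

variable {r n k : ℕ}

lemma rStirling1_eq_zero_of_lt (h : k < r) : rStirling1 r n k = 0 := by
  cases n with
  | zero => simp [rStirling1, Nat.ne_zero_of_lt h]
  | succ n => simp [rStirling1, h]

lemma rStirling1_self (r k : ℕ) : rStirling1 r r k = if k = r then 1 else 0 := by
  cases r with
  | zero => simp [rStirling1]
  | succ r =>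
    rcases lt_or_ge k (r + 1) with hk | hk
    · rw [rStirling1_eq_zero_of_lt hk, if_neg hk.ne]
    · simp [rStirling1, hk.not_gt]

lemma rStirling1_succ_succ (h : r ≤ n) :
    rStirling1 r (n + 1) (k + 1) = n * rStirling1 r n (k + 1) + rStirling1 r n k := by
  rcases lt_or_ge (k + 1) r with hk | hk
  · simp [rStirling1_eq_zero_of_lt hk, rStirling1_eq_zero_of_lt (k.lt_succ_self.trans hk)]
  · rw [rStirling1, if_neg (by lia), if_neg (by lia), if_neg k.succ_ne_zero, Nat.add_sub_cancel]

lemma rStirling1_succ_self (h : r ≤ n) : rStirling1 r (n + 1) r = n * rStirling1 r n r := by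
  cases r with
  | zero => cases n <;> simp [rStirling1]
  | succ r => rw [rStirling1_succ_succ h, rStirling1_eq_zero_of_lt r.lt_succ_self, add_zero]

lemma coeff_ascPochhammer_comp_X_add_natCast {S : Type*} [CommSemiring S] (r m k : ℕ) :
    ((ascPochhammer S m).comp (X + C (r : S))).coeff k = rStirling1 r (m + r) (k + r) := by
  induction m generalizing k with
  | zero => simp [rStirling1_self, coeff_one]
  | succ m ih =>
    have hsucc : (ascPochhammer S (m + 1)).comp (X + C (r : S)) =
        (ascPochhammer S m).comp (X + C (r : S)) * (X + C ((m + r : ℕ) : S)) := by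
      rw [ascPochhammer_succ_right, mul_comp, add_comp, X_comp, natCast_comp]
      simp only [map_natCast, Nat.cast_add, map_add]
      ring
    rw [hsucc, mul_add, coeff_add, coeff_mul_C, ih, add_right_comm m 1 r]
    cases k with
    | zero =>
      rw [zero_add, rStirling1_succ_self (Nat.le_add_left r m), coeff_mul_X_zero]
      push_cast
      ring
    | succ k =>
      rw [coeff_mul_X, ih, add_right_comm k 1 r, rStirling1_succ_succ (Nat.le_add_left r m)]
      push_cast
      ring

end rStirling1

lemma ascPochhammer_succ_comp_sub_comp_sub_one {S : Type*} [CommRing S] (m : ℕ) (q : S[X]) :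
    (ascPochhammer S (m + 1)).comp q - (ascPochhammer S (m + 1)).comp (q - 1) =
      (m + 1) • (ascPochhammer S m).comp q := by
  have h := congrArg (comp · (q - 1)) (ascPochhammer_succ_comp_X_add_one S m)
  simp only [add_comp, smul_comp, comp_assoc, X_comp, one_comp, sub_add_cancel] at h
  exact sub_eq_of_eq_add' h

lemma coeff_comp_neg_X {R : Type*} [Ring R] (p : R[X]) (k : ℕ) :
    (p.comp (-X)).coeff k = (-1) ^ k * p.coeff k := by
  rw [← neg_one_mul, ← C_1, ← C_neg, comp_C_mul_X_coeff,
    ((Commute.neg_one_left _).pow_left k).eq]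

/-- The Bernoulli umbra: the linear functional on `ℚ[X]` sending `X ^ k` to `bernoulli k`. -/
noncomputable def bernoulliUmbra : ℚ[X] →ₗ[ℚ] ℚ :=
  (basisMonomials ℚ).constr ℚ bernoulli

lemma bernoulliUmbra_monomial (k : ℕ) (c : ℚ) :
    bernoulliUmbra (monomial k c) = c * bernoulli k := by
  have h : bernoulliUmbra (monomial k 1) = bernoulli k := by
    simpa only [coe_basisMonomials, bernoulliUmbra] using
      (basisMonomials ℚ).constr_basis ℚ bernoulli k
  rw [← h, ← smul_eq_mul, ← map_smul, smul_monomial, smul_eq_mul, mul_one]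

lemma bernoulliUmbra_eq_sum_range {p : ℚ[X]} {n : ℕ} (h : p.natDegree < n) :
    bernoulliUmbra p = ∑ k ∈ Finset.range n, p.coeff k * bernoulli k := by
  conv_lhs => rw [p.as_sum_range' n h]
  simp only [map_sum, bernoulliUmbra_monomial]

lemma bernoulliUmbra_X_add_one_pow (n : ℕ) :
    bernoulliUmbra ((X + 1) ^ n) = bernoulli n + if n = 1 then 1 else 0 := by
  have hdeg : ((X + 1 : ℚ[X]) ^ n).natDegree < n + 1 := by
    rw [← C_1, natDegree_pow_X_add_C]
    exact n.lt_succ_self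
  simp only [bernoulliUmbra_eq_sum_range hdeg, coeff_X_add_one_pow]
  rw [Finset.sum_range_succ, sum_bernoulli, Nat.choose_self, Nat.cast_one, one_mul, add_comm]

lemma bernoulliUmbra_comp_X_add_one (p : ℚ[X]) :
    bernoulliUmbra (p.comp (X + 1)) = bernoulliUmbra p + p.coeff 1 := by
  induction p using Polynomial.induction_on' with
  | add p q hp hq => rw [add_comp, map_add, map_add, coeff_add, hp, hq, add_add_add_comm]
  | monomial n c =>
    rw [monomial_comp, ← smul_eq_C_mul, map_smul, bernoulliUmbra_X_add_one_pow,
      bernoulliUmbra_monomial, coeff_monomial, smul_eq_mul, mul_add, mul_ite, mul_one, mul_zero]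

lemma bernoulliUmbra_comp_neg_X {p : ℚ[X]} {n : ℕ} (h : p.natDegree < n) :
    bernoulliUmbra (p.comp (-X)) =
      ∑ k ∈ Finset.range n, (-1) ^ k * p.coeff k * bernoulli k := by
  have hdeg : (p.comp (-X)).natDegree < n := by
    rwa [natDegree_comp, natDegree_neg, natDegree_X, mul_one]
  simp only [bernoulliUmbra_eq_sum_range hdeg, coeff_comp_neg_X]

lemma coeff_one_ascPochhammer_succ_comp_X_add_C (a : ℚ) (m : ℕ) :
    ((ascPochhammer ℚ (m + 1)).comp (X + C a)).coeff 1 =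
      (m + 1) * bernoulliUmbra (((ascPochhammer ℚ m).comp (X + C a)).comp (-X)) := by
  set p := (ascPochhammer ℚ (m + 1)).comp (X + C a) with hp
  set q := (ascPochhammer ℚ m).comp (X + C a) with hq
  have hdiff : p.comp (-X) - (p.comp (-X)).comp (X + 1) = (m + 1) • q.comp (-X) := by
    have hshift : -(X + 1) + C a = -X + C a - 1 := by ring
    simp only [hp, hq, comp_assoc, add_comp, neg_comp, X_comp, C_comp, hshift]
    exact ascPochhammer_succ_comp_sub_comp_sub_one m (-X + C a)
  have humbra := congrArg bernoulliUmbra hdiff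
  rw [map_sub, map_nsmul, bernoulliUmbra_comp_X_add_one, coeff_comp_neg_X] at humbra
  simpa using humbra

lemma sum_coeff_ascPochhammer_comp_mul_bernoulli (a : ℚ) (m : ℕ) :
    ∑ k ∈ Finset.range (m + 1),
        (-1) ^ k * ((ascPochhammer ℚ m).comp (X + C a)).coeff k * bernoulli k =
      1 / (m + 1) * ((ascPochhammer ℚ (m + 1)).comp (X + C a)).coeff 1 := by
  have hdeg : ((ascPochhammer ℚ m).comp (X + C a)).natDegree < m + 1 := by
    simp [natDegree_comp, ascPochhammer_natDegree]
  rw [coeff_one_ascPochhammer_succ_comp_X_add_C, bernoulliUmbra_comp_neg_X hdeg]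
  field_simp

theorem stmt18 (m r : ℕ) :
    ∑ k ∈ Finset.range (m + 1),
        (-1 : ℚ) ^ k * rStirling1 (r + 1) (m + r + 1) (k + r + 1) * bernoulli k =
      (1 / (m + 1) : ℚ) * rStirling1 (r + 1) (m + r + 2) (r + 2) := by
  have h := sum_coeff_ascPochhammer_comp_mul_bernoulli ((r + 1 : ℕ) : ℚ) m
  simp only [coeff_ascPochhammer_comp_X_add_natCast] at h
  rwa [show m + 1 + (r + 1) = m + r + 2 by ring, show 1 + (r + 1) = r + 2 by ring] at h
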